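/- arXiv:2508.03880 — 2 statements merged into one kernel-verified Lean document; each statement's English description precedes it below -/
import Mathlib

section
/- Let α > 0 with α < n. There exists a constant C = C(n,α) such that for every set E ⊂ ℝⁿ and every non-negative f ∈ L¹(ℝⁿ) with (I_α * f)(x) ≥ 1 for all x ∈ E, one has |E|^{(n−α)/n} ≤ C ‖f‖_{L¹(ℝⁿ)}, where |E| denotes the Lebesgue outer measure of E. Consequently, if R_{α,1}(E) = 0 then |E| = 0. -/
open MeasureTheory Filter Metric Set
open scoped ENNReal NNReal Topology

noncomputable section

abbrev Euc (n : ℕ) := EuclideanSpace ℝ (Fin n)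

/-- Degree of a multi-index. -/
def mdeg {n : ℕ} (α : Fin n → ℕ) : ℕ := ∑ i, α i

/-- Iterated partial derivative along a list of coordinate directions. -/
def listDeriv {n : ℕ} : List (Fin n) → (Euc n → ℝ) → (Euc n → ℝ)
  | [], η => η
  | i :: l, η => fun x => fderiv ℝ (listDeriv l η) x (EuclideanSpace.single i 1)

/-- The partial derivative `D^α η` associated to a multi-index `α`. -/
def mderiv {n : ℕ} (α : Fin n → ℕ) (η : Euc n → ℝ) : Euc n → ℝ :=
  listDeriv ((List.finRange n).flatMap fun i => List.replicate (α i) i) η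

/-- `g` is the weak derivative `D^α f` on `ℝⁿ`. -/
def IsWeakDeriv {n : ℕ} (α : Fin n → ℕ) (f g : Euc n → ℝ) : Prop :=
  ∀ η : Euc n → ℝ, ContDiff ℝ (⊤ : ℕ∞) η → HasCompactSupport η →
    ∫ x, f x * mderiv α η x = (-1 : ℝ) ^ mdeg α * ∫ x, g x * η x

/-- `g` is the weak derivative `D^α f` on an open set `U`. -/
def IsWeakDerivOn {n : ℕ} (U : Set (Euc n)) (α : Fin n → ℕ) (f g : Euc n → ℝ) : Prop :=
  ∀ η : Euc n → ℝ, ContDiff ℝ (⊤ : ℕ∞) η → HasCompactSupport η → tsupport η ⊆ U →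
    ∫ x in U, f x * mderiv α η x = (-1 : ℝ) ^ mdeg α * ∫ x in U, g x * η x

/-- Membership in the Sobolev space `W^{k,p}(U)`. -/
def MemSobolevOn {n : ℕ} (k : ℕ) (p : ℝ) (U : Set (Euc n)) (f : Euc n → ℝ) : Prop :=
  MemLp f (ENNReal.ofReal p) (volume.restrict U) ∧
  ∀ α : Fin n → ℕ, mdeg α ≤ k → ∃ g : Euc n → ℝ,
    MemLp g (ENNReal.ofReal p) (volume.restrict U) ∧ IsWeakDerivOn U α f g

/-- Membership in the local Sobolev space `W^{k,p}_loc(Ω)`. -/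
def MemSobolevLoc {n : ℕ} (k : ℕ) (p : ℝ) (Ω : Set (Euc n)) (f : Euc n → ℝ) : Prop :=
  ∀ U : Set (Euc n), IsOpen U → Bornology.IsBounded U → closure U ⊆ Ω →
    MemSobolevOn k p U f

/-- The normalizing constant `γ(a)` of the Riesz kernel. -/
def rieszGamma (n : ℕ) (a : ℝ) : ℝ :=
  Real.pi ^ ((n : ℝ) / 2) * (2 : ℝ) ^ a * Real.Gamma (a / 2) / Real.Gamma (((n : ℝ) - a) / 2)

/-- The Riesz potential `I_a * g`, valued in `ℝ≥0∞`. -/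
def rieszPot {n : ℕ} (a : ℝ) (g : Euc n → ℝ) (x : Euc n) : ℝ≥0∞ :=
  (ENNReal.ofReal (rieszGamma n a))⁻¹ *
    ∫⁻ y, ENNReal.ofReal (g y) * ENNReal.ofReal (‖x - y‖ ^ (a - (n : ℝ)))

/-- The Riesz capacity `R_{a,p}`. -/
def rieszCap {n : ℕ} (a p : ℝ) (S : Set (Euc n)) : ℝ≥0∞ :=
  ⨅ (g : Euc n → ℝ) (_ : MemLp g (ENNReal.ofReal p) volume ∧ (∀ x, 0 ≤ g x) ∧
      ∀ x ∈ S, 1 ≤ rieszPot a g x),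
    ∫⁻ y, ENNReal.ofReal (g y) ^ p

/-- The precise representative of a (vector-valued) locally integrable function. -/
def preciseRepV {n : ℕ} {F : Type*} [NormedAddCommGroup F] [NormedSpace ℝ F]
    (f : Euc n → F) (x : Euc n) : F :=
  letI := Classical.propDecidable
  if h : ∃ L : F, Tendsto (fun ε : ℝ => ⨍ y in ball x ε, f y) (𝓝[>] (0:ℝ)) (𝓝 L)
  then h.choose else 0

/-- The precise representative of a real-valued locally integrable function. -/
def preciseRep {n : ℕ} (f : Euc n → ℝ) (x : Euc n) : ℝ := preciseRepV f x

/-- The Hardy–Littlewood maximal function (of an `ℝ≥0∞`-valued integrand). -/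
def maxFn {n : ℕ} (g : Euc n → ℝ≥0∞) (x : Euc n) : ℝ≥0∞ :=
  ⨆ (r : ℝ) (_ : 0 < r), (volume (ball x r))⁻¹ * ∫⁻ y in ball x r, g y

/-- `x` is a density point of `S`. -/
def DensityPt {n : ℕ} (S : Set (Euc n)) (x : Euc n) : Prop :=
  Tendsto (fun r : ℝ => volume (S ∩ ball x r) / volume (ball x r)) (𝓝[>] (0:ℝ)) (𝓝 1)

/-- `L` is the approximate differential of `φ` at `x₀`, relative to the domain `A`. -/
def HasApproxDerivAt {n : ℕ} (A : Set (Euc n)) (φ : Euc n → Euc n)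
    (L : Euc n →L[ℝ] Euc n) (x₀ : Euc n) : Prop :=
  DensityPt A x₀ ∧ ∀ ε : ℝ, 0 < ε →
    DensityPt {x | x ∈ A ∧ ‖φ x - φ x₀ - L (x - x₀)‖ ≤ ε * ‖x - x₀‖} x₀

end

/-!
A kernel `k` in the weak space `L^{p,∞}` with `p > 1` satisfies
`∫ x in s, k x ∂μ ≤ p / (p - 1) * ‖k‖_{p,∞} * μ s ^ (1 - 1 / p)` for every set `s` (integrate the
distribution function, split at the optimal level). Conversely such a bound, tested on the
superlevel sets of a function, controls its weak quasi-norm. Since the bound is additive in the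
function, `L^{p,∞}` obeys Minkowski's integral inequality up to the factor `p / (p - 1)`, which
for translates of one kernel is Young's inequality `L¹ * L^{p,∞} ⊆ L^{p,∞}`. The superlevel sets
of `‖x‖ ^ (a - n)` are balls, so this kernel lies in `L^{n/(n-a),∞}`; looking at the potential at
level `1` bounds the measure of `E`.
-/

section WeakLp

variable {X Y : Type*} [MeasurableSpace X] [MeasurableSpace Y] {μ : Measure X} {ν : Measure Y}
  {f : X → ℝ≥0∞} {p : ℝ}

/-- The quasi-norm of the weak Lebesgue (Lorentz) space `L^{p,∞}`. For `p > 0`, using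
`t ≤ f x` instead of `t < f x` and allowing `t = ∞` do not change the supremum. -/
noncomputable def weakLpNorm (f : X → ℝ≥0∞) (p : ℝ) (μ : Measure X) : ℝ≥0∞ :=
  ⨆ t : ℝ≥0∞, t * μ {x | t ≤ f x} ^ p⁻¹

lemma mul_measure_superlevel_rpow_le_weakLpNorm (t : ℝ≥0∞) :
    t * μ {x | t ≤ f x} ^ p⁻¹ ≤ weakLpNorm f p μ :=
  le_iSup (fun t : ℝ≥0∞ => t * μ {x | t ≤ f x} ^ p⁻¹) t

lemma measure_superlevel_le_weakLpNorm_div_rpow (hp : 0 < p) {t : ℝ≥0∞} (ht : t ≠ 0)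
    (ht' : t ≠ ∞) :
    μ {x | t ≤ f x} ≤ (weakLpNorm f p μ / t) ^ p := by
  rw [← ENNReal.rpow_inv_le_iff hp, ENNReal.le_div_iff_mul_le (.inl ht) (.inl ht'), mul_comm]
  exact mul_measure_superlevel_rpow_le_weakLpNorm t

lemma ae_ne_top_of_weakLpNorm_ne_top (hp : 0 < p) (hf : weakLpNorm f p μ ≠ ∞) :
    ∀ᵐ x ∂μ, f x ≠ ∞ := by
  have hle : ∞ * μ {x | ∞ ≤ f x} ^ p⁻¹ ≠ ∞ :=
    ne_top_of_le_ne_top hf (mul_measure_superlevel_rpow_le_weakLpNorm ∞)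
  have hzero : μ {x | ∞ ≤ f x} ^ p⁻¹ = 0 := by
    by_contra h
    exact hle (ENNReal.top_mul h)
  simpa [ae_iff] using (ENNReal.rpow_eq_zero_iff_of_pos (inv_pos.2 hp)).1 hzero

lemma weakLpNorm_comp_measurePreserving {g : Y → ℝ≥0∞} {φ : X → Y}
    (hφ : MeasurePreserving φ μ ν) (hg : Measurable g) :
    weakLpNorm (g ∘ φ) p μ = weakLpNorm g p ν :=
  iSup_congr fun t => by
    rw [← hφ.measure_preimage (measurableSet_le measurable_const hg).nullMeasurableSet]
    rfl

lemma lintegral_eq_lintegral_measure_superlevel (hf : AEMeasurable f μ)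
    (hfin : ∀ᵐ x ∂μ, f x ≠ ∞) :
    ∫⁻ x, f x ∂μ = ∫⁻ t in Ioi (0 : ℝ), μ {x | ENNReal.ofReal t ≤ f x} := by
  calc ∫⁻ x, f x ∂μ = ∫⁻ x, ENNReal.ofReal (f x).toReal ∂μ :=
        lintegral_congr_ae (hfin.mono fun x hx => (ENNReal.ofReal_toReal hx).symm)
    _ = ∫⁻ t in Ioi (0 : ℝ), μ {x | t ≤ (f x).toReal} :=
        lintegral_eq_lintegral_meas_le μ (.of_forall fun _ => ENNReal.toReal_nonneg)
          hf.ennreal_toReal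
    _ = ∫⁻ t in Ioi (0 : ℝ), μ {x | ENNReal.ofReal t ≤ f x} :=
        lintegral_congr fun t => measure_congr <| hfin.mono fun x hx =>
          propext (ENNReal.ofReal_le_iff_le_toReal hx).symm

lemma setLIntegral_le_mul_measure_add (hp : 0 < p) (hf : AEMeasurable f μ)
    (hfin : weakLpNorm f p μ ≠ ∞) (s : Set X) {T : ℝ} (hT : 0 ≤ T) :
    ∫⁻ x in s, f x ∂μ ≤ ENNReal.ofReal T * μ s +
      weakLpNorm f p μ ^ p * ∫⁻ t in Ioi T, ENNReal.ofReal (t ^ (-p)) := by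
  have tail (t : ℝ) (ht : t ∈ Ioi T) : μ {x | ENNReal.ofReal t ≤ f x} ≤
      weakLpNorm f p μ ^ p * ENNReal.ofReal (t ^ (-p)) := by
    have ht0 : 0 < t := hT.trans_lt ht
    calc μ {x | ENNReal.ofReal t ≤ f x} ≤ (weakLpNorm f p μ / ENNReal.ofReal t) ^ p :=
          measure_superlevel_le_weakLpNorm_div_rpow hp (by simpa using ht0) ENNReal.ofReal_ne_top
      _ = weakLpNorm f p μ ^ p * ENNReal.ofReal (t ^ (-p)) := by
          rw [ENNReal.div_rpow_of_nonneg _ _ hp.le, div_eq_mul_inv, ← ENNReal.rpow_neg,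
            ENNReal.ofReal_rpow_of_pos ht0]
  calc ∫⁻ x in s, f x ∂μ
      = ∫⁻ t in Ioi (0 : ℝ), μ.restrict s {x | ENNReal.ofReal t ≤ f x} :=
        lintegral_eq_lintegral_measure_superlevel hf.restrict
          (ae_restrict_of_ae (ae_ne_top_of_weakLpNorm_ne_top hp hfin))
    _ ≤ (∫⁻ t in Ioc 0 T, μ.restrict s {x | ENNReal.ofReal t ≤ f x}) +
          ∫⁻ t in Ioi T, μ.restrict s {x | ENNReal.ofReal t ≤ f x} := by
        rw [← Ioc_union_Ioi_eq_Ioi hT]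
        exact lintegral_union_le _ _ _
    _ ≤ (∫⁻ _ in Ioc 0 T, μ s) +
          ∫⁻ t in Ioi T, weakLpNorm f p μ ^ p * ENNReal.ofReal (t ^ (-p)) := by
        refine add_le_add (lintegral_mono fun t => ?_)
          (setLIntegral_mono' measurableSet_Ioi fun t ht => ?_)
        · exact (measure_mono (subset_univ _)).trans_eq (Measure.restrict_apply_univ s)
        · exact (Measure.restrict_le_self _).trans (tail t ht)
    _ = ENNReal.ofReal T * μ s +
          weakLpNorm f p μ ^ p * ∫⁻ t in Ioi T, ENNReal.ofReal (t ^ (-p)) := by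
        rw [setLIntegral_const, Real.volume_Ioc, sub_zero, mul_comm,
          lintegral_const_mul _ (by fun_prop)]

lemma lintegral_Ioi_rpow_neg (hp : 1 < p) {T : ℝ} (hT : 0 < T) :
    ∫⁻ t in Ioi T, ENNReal.ofReal (t ^ (-p)) = ENNReal.ofReal (T ^ (1 - p) / (p - 1)) := by
  rw [← ofReal_integral_eq_lintegral_ofReal (integrableOn_Ioi_rpow_of_lt (by linarith) hT)
    ((ae_restrict_mem measurableSet_Ioi).mono fun t ht => Real.rpow_nonneg (hT.trans ht).le _),
    integral_Ioi_rpow_of_lt (by linarith) hT, neg_div, ← div_neg]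
  ring_nf

-- The two terms balance, up to the factor `p - 1`, at the level `T = w * m ^ (-p⁻¹)`.
lemma mul_add_rpow_mul_rpow_div_eq (hp : 1 < p) {w m : ℝ} (hw : 0 < w) (hm : 0 < m) :
    w * m ^ (-p⁻¹) * m + w ^ p * ((w * m ^ (-p⁻¹)) ^ (1 - p) / (p - 1)) =
      p / (p - 1) * w * m ^ (1 - p⁻¹) := by
  have hp0 : p ≠ 0 := by positivity
  have hp1 : p - 1 ≠ 0 := by linarith
  have head : w * m ^ (-p⁻¹) * m = w * m ^ (1 - p⁻¹) := by
    rw [mul_assoc, ← Real.rpow_add_one hm.ne', neg_add_eq_sub]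
  have tail : w ^ p * (w * m ^ (-p⁻¹)) ^ (1 - p) = w * m ^ (1 - p⁻¹) := by
    rw [Real.mul_rpow hw.le (by positivity), ← mul_assoc, ← Real.rpow_add hw,
      ← Real.rpow_mul hm.le, add_sub_cancel, Real.rpow_one]
    congr 2
    field_simp
    ring
  rw [head, mul_div_assoc', tail]
  field_simp
  ring

/-- **Kolmogorov's inequality**. -/
theorem setLIntegral_le_weakLpNorm_mul_measure_rpow (hp : 1 < p) (hf : AEMeasurable f μ)
    (s : Set X) :
    ∫⁻ x in s, f x ∂μ ≤ ENNReal.ofReal (p / (p - 1)) * weakLpNorm f p μ * μ s ^ (1 - p⁻¹) := by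
  have hp0 : 0 < p := by linarith
  have hp1 : 0 < p - 1 := by linarith
  have hexp : 0 < 1 - p⁻¹ := sub_pos.2 (inv_lt_one_of_one_lt₀ hp)
  have hconst : ENNReal.ofReal (p / (p - 1)) ≠ 0 := by
    simpa using div_pos hp0 hp1
  rcases eq_or_ne (μ s) 0 with hs0 | hs0
  · simp [Measure.restrict_eq_zero.2 hs0]
  rcases eq_or_ne (weakLpNorm f p μ) ∞ with hW | hW
  · simp [hW, hconst, hs0, hexp.not_gt, ENNReal.mul_top, ENNReal.top_mul]
  have hsplit {T : ℝ} (hT : 0 ≤ T) := setLIntegral_le_mul_measure_add hp0 hf hW s hT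
  rcases eq_or_ne (weakLpNorm f p μ) 0 with hW0 | hW0
  · simpa [hW0, hp0] using hsplit le_rfl
  rcases eq_or_ne (μ s) ∞ with hs | hs
  · simp [hs, hconst, hW0, hexp, ENNReal.mul_top]
  obtain ⟨w, hw, hWw⟩ : ∃ w : ℝ, 0 < w ∧ weakLpNorm f p μ = ENNReal.ofReal w :=
    ⟨_, ENNReal.toReal_pos hW0 hW, (ENNReal.ofReal_toReal hW).symm⟩
  obtain ⟨m, hm, hsm⟩ : ∃ m : ℝ, 0 < m ∧ μ s = ENNReal.ofReal m :=
    ⟨_, ENNReal.toReal_pos hs0 hs, (ENNReal.ofReal_toReal hs).symm⟩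
  have hT : 0 < w * m ^ (-p⁻¹) := by positivity
  refine (hsplit hT.le).trans_eq ?_
  rw [lintegral_Ioi_rpow_neg hp hT, hWw, hsm, ENNReal.ofReal_rpow_of_pos hw,
    ENNReal.ofReal_rpow_of_pos hm, ← ENNReal.ofReal_mul hT.le, ← ENNReal.ofReal_mul (by positivity),
    ← ENNReal.ofReal_add (by positivity) (by positivity), mul_add_rpow_mul_rpow_div_eq hp hw hm,
    ENNReal.ofReal_mul (by positivity), ENNReal.ofReal_mul (by positivity)]

lemma mul_measure_rpow_le_of_setLIntegral_le {A t : ℝ≥0∞} (hp : 0 < p) {s : Set X}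
    (hs : MeasurableSet s) (hfin : μ s ≠ ∞) (ht : ∀ x ∈ s, t ≤ f x)
    (h : ∫⁻ x in s, f x ∂μ ≤ A * μ s ^ (1 - p⁻¹)) : t * μ s ^ p⁻¹ ≤ A := by
  rcases eq_or_ne (μ s) 0 with h0 | h0
  · simp only [h0, ENNReal.zero_rpow_of_pos (inv_pos.2 hp), mul_zero, zero_le]
  have hpos : μ s ^ (1 - p⁻¹) ≠ 0 := (ENNReal.rpow_pos (pos_iff_ne_zero.2 h0) hfin).ne'
  have hlt : μ s ^ (1 - p⁻¹) ≠ ∞ := ENNReal.rpow_ne_top_of_ne_zero h0 hfin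
  rw [← ENNReal.mul_le_mul_iff_left hpos hlt]
  calc t * μ s ^ p⁻¹ * μ s ^ (1 - p⁻¹) = ∫⁻ _ in s, t ∂μ := by
        rw [mul_assoc, ← ENNReal.rpow_add _ _ h0 hfin, add_sub_cancel, ENNReal.rpow_one,
          setLIntegral_const]
    _ ≤ ∫⁻ x in s, f x ∂μ := setLIntegral_mono' hs ht
    _ ≤ A * μ s ^ (1 - p⁻¹) := h

lemma weakLpNorm_le_of_forall_setLIntegral_le [SigmaFinite μ] {A : ℝ≥0∞} (hp : 0 < p)
    (hf : Measurable f)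
    (h : ∀ s, MeasurableSet s → μ s ≠ ∞ → ∫⁻ x in s, f x ∂μ ≤ A * μ s ^ (1 - p⁻¹)) :
    weakLpNorm f p μ ≤ A := by
  refine iSup_le fun t => ?_
  have hsup : μ {x | t ≤ f x} ^ p⁻¹ =
      ⨆ i, μ ({x | t ≤ f x} ∩ spanningSets μ i) ^ p⁻¹ := by
    rw [← Measure.iSup_restrict_spanningSets]
    simp only [Measure.restrict_apply' (measurableSet_spanningSets μ _)]
    exact (ENNReal.orderIsoRpow p⁻¹ (inv_pos.2 hp)).map_iSup _
  rw [hsup, ENNReal.mul_iSup]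
  refine iSup_le fun i => ?_
  have hs : MeasurableSet ({x | t ≤ f x} ∩ spanningSets μ i) :=
    (measurableSet_le measurable_const hf).inter (measurableSet_spanningSets μ i)
  have hfin : μ ({x | t ≤ f x} ∩ spanningSets μ i) ≠ ∞ :=
    measure_ne_top_of_subset inter_subset_right (measure_spanningSets_lt_top μ i).ne
  exact mul_measure_rpow_le_of_setLIntegral_le hp hs hfin (fun x hx => hx.1) (h _ hs hfin)

/-- **Minkowski's integral inequality** for `L^{p,∞}`. -/
theorem weakLpNorm_lintegral_le [SigmaFinite μ] [SFinite ν] (hp : 1 < p) {K : X → Y → ℝ≥0∞}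
    (hK : Measurable (Function.uncurry K)) :
    weakLpNorm (fun x => ∫⁻ y, K x y ∂ν) p μ ≤
      ENNReal.ofReal (p / (p - 1)) * ∫⁻ y, weakLpNorm (fun x => K x y) p μ ∂ν := by
  refine weakLpNorm_le_of_forall_setLIntegral_le (by linarith) hK.lintegral_prod_right
    fun s _ hfin => ?_
  have hexp : 0 ≤ 1 - p⁻¹ := (sub_pos.2 (inv_lt_one_of_one_lt₀ hp)).le
  calc ∫⁻ x in s, ∫⁻ y, K x y ∂ν ∂μ = ∫⁻ y, ∫⁻ x in s, K x y ∂μ ∂ν :=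
        lintegral_lintegral_swap hK.aemeasurable
    _ ≤ ∫⁻ y, ENNReal.ofReal (p / (p - 1)) * weakLpNorm (fun x => K x y) p μ *
          μ s ^ (1 - p⁻¹) ∂ν :=
        lintegral_mono fun y => setLIntegral_le_weakLpNorm_mul_measure_rpow hp
          (hK.comp measurable_prodMk_right).aemeasurable s
    _ = ENNReal.ofReal (p / (p - 1)) * (∫⁻ y, weakLpNorm (fun x => K x y) p μ ∂ν) *
          μ s ^ (1 - p⁻¹) := by
        rw [lintegral_mul_const' _ _ (ENNReal.rpow_ne_top_of_nonneg hexp hfin),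
          lintegral_const_mul' _ _ ENNReal.ofReal_ne_top]

/-- **Young's inequality** for `L^{p,∞}`. -/
theorem weakLpNorm_lintegral_sub_le {G : Type*} [AddGroup G] [MeasurableSpace G]
    [MeasurableAdd G] [MeasurableSub₂ G] {μ ν : Measure G} [SigmaFinite μ]
    [μ.IsAddRightInvariant] [SFinite ν] (hp : 1 < p) {k : G → ℝ≥0∞} (hk : Measurable k) :
    weakLpNorm (fun x => ∫⁻ y, k (x - y) ∂ν) p μ ≤
      ENNReal.ofReal (p / (p - 1)) * (weakLpNorm k p μ * ν univ) := by
  have htranslate (y : G) : weakLpNorm (fun x => k (x - y)) p μ = weakLpNorm k p μ :=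
    weakLpNorm_comp_measurePreserving (measurePreserving_sub_right μ y) hk
  simpa only [htranslate, lintegral_const] using
    weakLpNorm_lintegral_le (μ := μ) (ν := ν) (K := fun x y => k (x - y)) hp
      (hk.comp measurable_sub)

end WeakLp

lemma le_rpow_neg_inv_of_le_rpow_neg {r s u : ℝ} (hs : 0 < s) (hr : 0 < r) (hu : 0 ≤ u)
    (h : r ≤ u ^ (-s)) : u ≤ r ^ (-s)⁻¹ := by
  rcases hu.eq_or_lt with rfl | hu0
  · positivity
  · exact (Real.le_rpow_inv_iff_of_neg hu0 hr (neg_lt_zero.2 hs)).2 h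

section RieszKernel

open Module

variable {E : Type*} [NormedAddCommGroup E] [NormedSpace ℝ E] [FiniteDimensional ℝ E]
  [MeasurableSpace E] [BorelSpace E] (μ : Measure E) [μ.IsAddHaarMeasure] {s : ℝ}

lemma weakLpNorm_norm_rpow_neg_le [Nontrivial E] (hs : 0 < s) :
    weakLpNorm (fun x : E => ENNReal.ofReal (‖x‖ ^ (-s))) (finrank ℝ E / s) μ ≤
      μ (ball 0 1) ^ (s / finrank ℝ E) := by
  have hd : (0 : ℝ) < finrank ℝ E := by exact_mod_cast finrank_pos
  have hexp : 0 < s / finrank ℝ E := div_pos hs hd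
  refine iSup_le fun t => ?_
  rw [inv_div]
  rcases eq_or_ne t ∞ with rfl | htop
  · simp [hexp]
  rcases eq_or_ne t 0 with rfl | h0
  · simp
  obtain ⟨r, hr, rfl⟩ : ∃ r : ℝ, 0 < r ∧ t = ENNReal.ofReal r :=
    ⟨_, ENNReal.toReal_pos h0 htop, (ENNReal.ofReal_toReal htop).symm⟩
  have hsub : {x : E | ENNReal.ofReal r ≤ ENNReal.ofReal (‖x‖ ^ (-s))} ⊆
      closedBall 0 (r ^ (-s)⁻¹) := fun x hx =>
    mem_closedBall_zero_iff.2 <| le_rpow_neg_inv_of_le_rpow_neg hs hr (norm_nonneg x) <|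
      (ENNReal.ofReal_le_ofReal_iff (by positivity)).1 hx
  have hscale : r * (((r ^ (-s)⁻¹) ^ finrank ℝ E) ^ (s / finrank ℝ E)) = 1 := by
    rw [← Real.rpow_natCast, ← Real.rpow_mul hr.le, ← Real.rpow_mul hr.le]
    nth_rw 1 [← Real.rpow_one r]
    rw [← Real.rpow_add hr]
    have hexponent : 1 + (-s)⁻¹ * finrank ℝ E * (s / finrank ℝ E) = 0 := by
      field_simp
      ring
    rw [hexponent, Real.rpow_zero]
  calc ENNReal.ofReal r *
        μ {x : E | ENNReal.ofReal r ≤ ENNReal.ofReal (‖x‖ ^ (-s))} ^ (s / finrank ℝ E)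
      ≤ ENNReal.ofReal r * μ (closedBall (0 : E) (r ^ (-s)⁻¹)) ^ (s / finrank ℝ E) := by
        gcongr
    _ = μ (ball 0 1) ^ (s / finrank ℝ E) := by
        rw [Measure.addHaar_closedBall μ _ (by positivity), ENNReal.mul_rpow_of_nonneg _ _ hexp.le,
          ENNReal.ofReal_rpow_of_pos (by positivity), ← mul_assoc, ← ENNReal.ofReal_mul hr.le,
          hscale, ENNReal.ofReal_one, one_mul]

theorem weakLpNorm_lintegral_norm_sub_rpow_neg_le (ν : Measure E) [SFinite ν] (hs : 0 < s)
    (hsd : s < finrank ℝ E) :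
    weakLpNorm (fun x => ∫⁻ y, ENNReal.ofReal (‖x - y‖ ^ (-s)) ∂ν) (finrank ℝ E / s) μ ≤
      ENNReal.ofReal (finrank ℝ E / (finrank ℝ E - s)) *
        (μ (ball 0 1) ^ (s / finrank ℝ E) * ν univ) := by
  have hd : (0 : ℝ) < finrank ℝ E := hs.trans hsd
  have : Nontrivial E := nontrivial_of_finrank_pos (R := ℝ) (Nat.cast_pos.1 hd)
  have hconj : (finrank ℝ E / s) / (finrank ℝ E / s - 1) = finrank ℝ E / (finrank ℝ E - s) := by
    rw [div_sub_one hs.ne', div_div_div_cancel_right₀ hs.ne']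
  calc weakLpNorm (fun x => ∫⁻ y, ENNReal.ofReal (‖x - y‖ ^ (-s)) ∂ν) (finrank ℝ E / s) μ
      ≤ ENNReal.ofReal ((finrank ℝ E / s) / (finrank ℝ E / s - 1)) *
          (weakLpNorm (fun x => ENNReal.ofReal (‖x‖ ^ (-s))) (finrank ℝ E / s) μ * ν univ) :=
        weakLpNorm_lintegral_sub_le (k := fun x => ENNReal.ofReal (‖x‖ ^ (-s)))
          ((one_lt_div hs).2 hsd) (by fun_prop)
    _ ≤ ENNReal.ofReal (finrank ℝ E / (finrank ℝ E - s)) *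
          (μ (ball 0 1) ^ (s / finrank ℝ E) * ν univ) := by
        rw [hconj]
        gcongr
        exact weakLpNorm_norm_rpow_neg_le μ hs

end RieszKernel

section RieszPotential

variable {n : ℕ} {a : ℝ}

lemma rieszGamma_pos (ha : 0 < a) (han : a < n) : 0 < rieszGamma n a :=
  div_pos (mul_pos (mul_pos (Real.rpow_pos_of_pos Real.pi_pos _) (Real.rpow_pos_of_pos two_pos _))
    (Real.Gamma_pos_of_pos (by linarith))) (Real.Gamma_pos_of_pos (by linarith))

lemma rieszPot_eq_lintegral_sub {f : Euc n → ℝ} (hf : AEMeasurable f) (x : Euc n) :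
    rieszPot a f x = ∫⁻ y, ENNReal.ofReal (‖x - y‖ ^ (-(n - a)))
      ∂((ENNReal.ofReal (rieszGamma n a))⁻¹ •
        volume.withDensity fun y => ENNReal.ofReal (f y)) := by
  rw [lintegral_smul_measure, smul_eq_mul, neg_sub,
    lintegral_withDensity_eq_lintegral_mul₀ hf.ennreal_ofReal (by fun_prop)]
  rfl

/-- The constant in the weak-type estimate `L¹ → L^{n/(n-a),∞}` for the Riesz potential `I_a` on
`ℝⁿ`. The factor `n / a` is the conjugate exponent of `n / (n - a)`, and the power of the measure
of the unit ball is the weak norm of `‖x‖ ^ (a - n)`. -/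
noncomputable def rieszWeakTypeConst (n : ℕ) (a : ℝ) : ℝ :=
  n / a * (volume.real (ball (0 : Euc n) 1) ^ ((n - a) / n) * (rieszGamma n a)⁻¹)

lemma rieszWeakTypeConst_pos (ha : 0 < a) (han : a < n) : 0 < rieszWeakTypeConst n a := by
  have hball : 0 < volume.real (ball (0 : Euc n) 1) :=
    ENNReal.toReal_pos (measure_ball_pos _ _ one_pos).ne' measure_ball_lt_top.ne
  exact mul_pos (div_pos (ha.trans han) ha)
    (mul_pos (Real.rpow_pos_of_pos hball _) (inv_pos.2 (rieszGamma_pos ha han)))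

theorem weakLpNorm_rieszPot_le (ha : 0 < a) (han : a < n) {f : Euc n → ℝ} (hf : AEMeasurable f) :
    weakLpNorm (rieszPot a f) (n / (n - a)) volume ≤
      ENNReal.ofReal (rieszWeakTypeConst n a) * ∫⁻ y, ENNReal.ofReal (f y) := by
  have hn : (0 : ℝ) < n := ha.trans han
  have hs : 0 < n - a := sub_pos.2 han
  have hconst : ENNReal.ofReal (rieszWeakTypeConst n a) = ENNReal.ofReal (n / a) *
      (volume (ball (0 : Euc n) 1) ^ ((n - a) / n) * (ENNReal.ofReal (rieszGamma n a))⁻¹) := by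
    rw [rieszWeakTypeConst, ENNReal.ofReal_mul (by positivity), ENNReal.ofReal_mul (by positivity),
      ENNReal.ofReal_inv_of_pos (rieszGamma_pos ha han),
      ← ENNReal.ofReal_rpow_of_nonneg measureReal_nonneg (div_nonneg hs.le hn.le),
      ofReal_measureReal measure_ball_lt_top.ne]
  have hweak := weakLpNorm_lintegral_norm_sub_rpow_neg_le (volume : Measure (Euc n))
    ((ENNReal.ofReal (rieszGamma n a))⁻¹ • volume.withDensity fun y => ENNReal.ofReal (f y))
    hs (by simpa using ha)
  simpa only [funext (rieszPot_eq_lintegral_sub hf), hconst, finrank_euclideanSpace_fin,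
    sub_sub_cancel, Measure.smul_apply, smul_eq_mul, withDensity_apply _ MeasurableSet.univ,
    setLIntegral_univ, mul_assoc] using hweak

theorem measure_rpow_le_lintegral_of_one_le_rieszPot (ha : 0 < a) (han : a < n)
    {E : Set (Euc n)} {f : Euc n → ℝ} (hf : AEMeasurable f) (hE : ∀ x ∈ E, 1 ≤ rieszPot a f x) :
    volume E ^ ((n - a) / n) ≤
      ENNReal.ofReal (rieszWeakTypeConst n a) * ∫⁻ y, ENNReal.ofReal (f y) :=
  calc volume E ^ ((n - a) / n)
      ≤ volume {x | 1 ≤ rieszPot a f x} ^ ((n - a) / n) :=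
        ENNReal.rpow_le_rpow (measure_mono hE) (div_nonneg (sub_pos.2 han).le n.cast_nonneg)
    _ = 1 * volume {x | 1 ≤ rieszPot a f x} ^ (n / (n - a))⁻¹ := by rw [one_mul, inv_div]
    _ ≤ weakLpNorm (rieszPot a f) (n / (n - a)) volume :=
        mul_measure_superlevel_rpow_le_weakLpNorm 1
    _ ≤ ENNReal.ofReal (rieszWeakTypeConst n a) * ∫⁻ y, ENNReal.ofReal (f y) :=
        weakLpNorm_rieszPot_le ha han hf

theorem measure_rpow_le_rieszCap_one (ha : 0 < a) (han : a < n) (E : Set (Euc n)) :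
    volume E ^ ((n - a) / n) ≤ ENNReal.ofReal (rieszWeakTypeConst n a) * rieszCap a 1 E := by
  have hC : ENNReal.ofReal (rieszWeakTypeConst n a) ≠ 0 := by
    simpa using rieszWeakTypeConst_pos ha han
  simp only [rieszCap, ENNReal.rpow_one, ENNReal.mul_iInf_of_ne hC ENNReal.ofReal_ne_top,
    le_iInf_iff]
  rintro f ⟨hf, _, hE⟩
  exact measure_rpow_le_lintegral_of_one_le_rieszPot ha han hf.aemeasurable hE

end RieszPotential

/-- capacitary estimate for Lebesgue measure, case `p = 1`, and
absolute continuity of Lebesgue measure with respect to the capacity `R_{α,1}`. -/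
theorem lebesgue_abs_cont_rieszCap_one {n : ℕ} {a : ℝ}
    (ha : 0 < a) (han : a < n) :
    ∃ C : ℝ, 0 < C ∧
      (∀ (E : Set (Euc n)) (f : Euc n → ℝ),
        MemLp f 1 volume → (∀ x, 0 ≤ f x) →
        (∀ x ∈ E, 1 ≤ rieszPot a f x) →
        volume E ^ (((n : ℝ) - a) / (n : ℝ)) ≤
          ENNReal.ofReal C * ∫⁻ y, ENNReal.ofReal (f y)) ∧
      ∀ E : Set (Euc n), rieszCap a 1 E = 0 → volume E = 0 := by
  refine ⟨rieszWeakTypeConst n a, rieszWeakTypeConst_pos ha han, fun E f hf _ hE =>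
    measure_rpow_le_lintegral_of_one_le_rieszPot ha han hf.aemeasurable hE, fun E hE => ?_⟩
  have hexp : 0 < ((n : ℝ) - a) / n := div_pos (sub_pos.2 han) (ha.trans han)
  have hzero : volume E ^ (((n : ℝ) - a) / n) = 0 := by
    simpa [hE] using measure_rpow_le_rieszCap_one ha han E
  exact (ENNReal.rpow_eq_zero_iff_of_pos hexp).1 hzero
end

section
/- Let 1 ≤ p ≤ ∞ and f ∈ W^{1,p}(ℝⁿ). For α ∈ (0,∞) let A_α := { x ∈ ℝⁿ : M|∇f|(x) ≤ α }, where M denotes the Hardy–Littlewood maximal operator and ∇f is the weak gradient, and let 𝒩 ⊂ ℝⁿ be the set of points x at which the limit lim_{r→0⁺} ⨍_{B(x,r)} f(y) dy does not exist or is not finite. Then the restriction of the precise representative f* to A_α \ 𝒩 is Lipschitz continuous; moreover there exists a constant C = C(n) such that |f*(x) − f*(y)| ≤ C α |x − y| for all x, y ∈ A_α \ 𝒩. -/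
/-!
Fix `x` with `⨍_{B(x,r)} |∇f| ≤ α` for all `r > 0`. The averages of `f` over balls `B(c,r)` are
`3ⁿα`-Lipschitz in `(c,r)` on the cone `|c - x| ≤ r`: writing two of them as averages over the unit
ball of `f(a + sz)` and `f(b + tz)`, their difference is controlled by integrating `|∇f|` along the
segment from `a + sz` to `b + tz`. At time `θ` of the segment the variable `z` sweeps out a ball
`B(c,r)` of the same cone. For a mollification of `f` at scale at most `r`, the average of the
gradient over `B(c,r)` is at most `3ⁿ` times the average of `|∇f|` over `B(x,3r)`, hence at most
`3ⁿα`; Fatou's lemma removes the mollification.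

For two good points at distance `R`, moving from `x` to `B(x,R)`, then to `B(y,R)` and finally to
`y` costs `3ⁿαR` each time, which gives the constant `3ⁿ⁺¹`.
-/

open MeasureTheory Filter Metric Set
open scoped ENNReal NNReal Topology

/-- `g` is the weak gradient of `f`. -/
def IsWeakGradient {n : ℕ} (f : Euc n → ℝ) (g : Euc n → Euc n) : Prop :=
  ∀ i : Fin n, IsWeakDeriv (Pi.single i 1) f
    (fun x => (inner ℝ (g x) (EuclideanSpace.single i 1) : ℝ))

section Affine

open Module (finrank)
open AffineMap (lineMap)
open scoped ProbabilityTheory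

variable {E F : Type*} [NormedAddCommGroup E] [NormedSpace ℝ E]
  [NormedAddCommGroup F] [NormedSpace ℝ F]

theorem preimage_add_smul_ball (a : E) {s : ℝ} (hs : 0 < s) :
    (fun z : E => a + s • z) ⁻¹' ball a s = ball 0 1 := by
  ext z
  simp [norm_smul, abs_of_pos hs, mul_lt_iff_lt_one_right hs]

theorem edist_add_smul_le (a b : E) (s t : ℝ) {z : E} (hz : z ∈ ball (0 : E) 1) :
    edist (a + s • z) (b + t • z) ≤ edist a b + edist s t := by
  have norm_le : ‖z‖ ≤ 1 := (mem_ball_zero_iff.1 hz).le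
  have dist_smul_le : dist (s • z) (t • z) ≤ dist s t := by
    rw [dist_eq_norm, ← sub_smul, norm_smul]
    exact mul_le_of_le_one_right (norm_nonneg _) norm_le
  calc edist (a + s • z) (b + t • z) ≤ edist a b + edist (s • z) (t • z) := edist_add_add_le ..
    _ ≤ edist a b + edist s t := by
      gcongr
      simpa only [edist_dist] using ENNReal.ofReal_le_ofReal dist_smul_le

theorem lineMap_add_smul (a b z : E) (s t θ : ℝ) :
    lineMap (a + s • z) (b + t • z) θ = lineMap a b θ + lineMap s t θ • z := by
  simp only [AffineMap.lineMap_apply_module, smul_eq_mul]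
  module

theorem dist_lineMap_le_lineMap {a b x : E} {s t θ : ℝ} (ha : dist a x ≤ s) (hb : dist b x ≤ t)
    (hθ : θ ∈ Icc (0 : ℝ) 1) : dist (lineMap a b θ) x ≤ lineMap s t θ := by
  have convex := (convexOn_dist x convex_univ).2 (mem_univ a) (mem_univ b)
    (sub_nonneg.2 hθ.2) hθ.1 (sub_add_cancel 1 θ)
  rw [AffineMap.lineMap_apply_module, AffineMap.lineMap_apply_module]
  refine convex.trans ?_
  have := hθ.1
  have := sub_nonneg.2 hθ.2
  gcongr

theorem min_le_lineMap (s t : ℝ) {θ : ℝ} (hθ : θ ∈ Icc (0 : ℝ) 1) : min s t ≤ lineMap s t θ := by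
  have mem : lineMap s t θ ∈ segment ℝ s t := by
    rw [segment_eq_image_lineMap]
    exact mem_image_of_mem _ hθ
  exact (segment_subset_uIcc s t mem).1

theorem edist_le_lintegral_enorm_fderiv_lineMap {f : E → F} (hf : ContDiff ℝ 1 f) (a b : E) :
    edist (f a) (f b) ≤
      ∫⁻ θ in Icc (0 : ℝ) 1, ‖fderiv ℝ f (lineMap a b θ)‖ₑ * edist a b := by
  let γ : ℝ → E := lineMap a b
  have deriv_comp (θ : ℝ) : deriv (f ∘ γ) θ = fderiv ℝ f (γ θ) (b - a) :=
    ((hf.differentiable one_ne_zero _).hasFDerivAt.comp_hasDerivAt θ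
      AffineMap.hasDerivAt_lineMap).deriv
  have contDiff_comp : ContDiff ℝ 1 (f ∘ γ) :=
    hf.comp (ContinuousAffineMap.lineMap (R := ℝ) a b).contDiff
  calc edist (f a) (f b) = ‖(f ∘ γ) 1 - (f ∘ γ) 0‖ₑ := by
        simp [γ, edist_comm (f a), edist_eq_enorm_sub]
    _ ≤ ∫⁻ θ in Icc (0 : ℝ) 1, ‖deriv (f ∘ γ) θ‖ₑ :=
        enorm_sub_le_lintegral_deriv_of_contDiffOn_Icc contDiff_comp.contDiffOn zero_le_one
    _ ≤ _ := lintegral_mono fun θ => by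
        simpa only [deriv_comp, edist_comm a, edist_eq_enorm_sub] using
          ContinuousLinearMap.le_opENorm _ _

variable [FiniteDimensional ℝ E] [MeasurableSpace E] [BorelSpace E]
  {μ : Measure E} [μ.IsAddHaarMeasure]

theorem map_add_smul (a : E) {s : ℝ} (hs : 0 < s) :
    μ.map (fun z => a + s • z) = ENNReal.ofReal (s ^ finrank ℝ E)⁻¹ • μ := by
  change μ.map ((a + ·) ∘ (s • ·)) = _
  rw [← Measure.map_map (by fun_prop) (by fun_prop), Measure.map_addHaar_smul μ hs.ne',
    Measure.map_smul, map_add_left_eq_self, abs_of_pos (by positivity)]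

theorem measurePreserving_add_smul_cond_ball (a : E) {s : ℝ} (hs : 0 < s) :
    MeasurePreserving (fun z => a + s • z) μ[|ball 0 1] μ[|ball a s] := by
  have hs' : ENNReal.ofReal (s ^ finrank ℝ E) ≠ 0 := by simpa using pow_pos hs _
  refine ⟨by fun_prop, ?_⟩
  rw [ProbabilityTheory.cond, ProbabilityTheory.cond, Measure.map_smul,
    ← preimage_add_smul_ball a hs, ← Measure.restrict_map (by fun_prop) measurableSet_ball,
    map_add_smul a hs, Measure.restrict_smul, smul_smul, preimage_add_smul_ball a hs,
    Measure.addHaar_ball_of_pos μ a hs, ENNReal.ofReal_inv_of_pos (by positivity),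
    ENNReal.mul_inv (.inl hs') (.inl ENNReal.ofReal_ne_top), mul_comm]

theorem ae_comp_add_smul_cond_ball {p : E → Prop} (hp : ∀ᵐ y ∂μ, p y) (a : E) {s : ℝ}
    (hs : 0 < s) : ∀ᵐ z ∂μ[|ball 0 1], p (a + s • z) :=
  (measurePreserving_add_smul_cond_ball a hs).quasiMeasurePreserving.ae
    (ProbabilityTheory.cond_absolutelyContinuous.ae_le hp)

theorem lintegral_edist_comp_add_smul_le_of_contDiff {f : E → F} (hf : ContDiff ℝ 1 f)
    {a b : E} {s t : ℝ} (hs : 0 < s) (ht : 0 < t) {K : ℝ≥0∞}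
    (hK : ∀ θ ∈ Icc (0 : ℝ) 1,
      ∫⁻ y, ‖fderiv ℝ f y‖ₑ ∂μ[|ball (lineMap a b θ) (lineMap s t θ)] ≤ K) :
    ∫⁻ z, edist (f (a + s • z)) (f (b + t • z)) ∂μ[|ball 0 1] ≤
      K * (edist a b + edist s t) := by
  let ν : Measure E := μ[|ball 0 1]
  let D (θ : ℝ) (z : E) : ℝ≥0∞ := ‖fderiv ℝ f (lineMap a b θ + lineMap s t θ • z)‖ₑ
  let ℓ : ℝ≥0∞ := edist a b + edist s t
  have hℓ : ℓ ≠ ∞ := by finiteness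
  have measurable_D : Measurable fun q : E × ℝ => D q.2 q.1 := by
    have := hf.continuous_fderiv one_ne_zero
    have (c d : E) : Continuous (lineMap c d : ℝ → E) := AffineMap.lineMap_continuous
    have : Continuous (lineMap s t : ℝ → ℝ) := AffineMap.lineMap_continuous
    exact Continuous.measurable (by fun_prop)
  have lintegral_D_le {θ : ℝ} (hθ : θ ∈ Icc (0 : ℝ) 1) : ∫⁻ z, D θ z ∂ν ≤ K := by
    have radius_pos : 0 < lineMap s t θ := (lt_min hs ht).trans_le (min_le_lineMap s t hθ)
    exact ((measurePreserving_add_smul_cond_ball _ radius_pos).lintegral_comp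
      (hf.continuous_fderiv one_ne_zero).enorm.measurable).trans_le (hK θ hθ)
  calc ∫⁻ z, edist (f (a + s • z)) (f (b + t • z)) ∂ν
      ≤ ∫⁻ z, (∫⁻ θ in Icc (0 : ℝ) 1, D θ z * ℓ) ∂ν := by
        refine lintegral_mono_ae ?_
        filter_upwards [ProbabilityTheory.ae_cond_mem measurableSet_ball] with z hz
        refine (edist_le_lintegral_enorm_fderiv_lineMap hf _ _).trans
          (lintegral_mono fun θ => ?_)
        rw [lineMap_add_smul]
        gcongr
        exact edist_add_smul_le a b s t hz
    _ = ∫⁻ θ in Icc (0 : ℝ) 1, (∫⁻ z, D θ z ∂ν) * ℓ := by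
        rw [lintegral_lintegral_swap (measurable_D.mul_const ℓ).aemeasurable]
        exact lintegral_congr fun θ => lintegral_mul_const' _ _ hℓ
    _ ≤ ∫⁻ _ in Icc (0 : ℝ) 1, K * ℓ :=
        setLIntegral_mono' measurableSet_Icc fun θ hθ => by
          gcongr
          exact lintegral_D_le hθ
    _ = K * ℓ := by simp

end Affine

section Convolution

open ContinuousLinearMap (lsmul)
open Module (finrank)
open scoped Convolution ProbabilityTheory

variable {E F : Type*} [NormedAddCommGroup E] [MeasurableSpace E] [BorelSpace E]
  [NormedAddCommGroup F] [NormedSpace ℝ F]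
  {μ : Measure E} {h : E → F}

theorem setLIntegral_enorm_convolution_le [SecondCountableTopology E] [SFinite μ]
    [μ.IsAddRightInvariant] {φ : E → ℝ}
    (hφ : AEStronglyMeasurable φ μ) (hh : AEStronglyMeasurable h μ) {δ : ℝ}
    (hδ : Function.support φ ⊆ ball 0 δ) (S : Set E) :
    ∫⁻ x in S, ‖(φ ⋆[lsmul ℝ ℝ, μ] h) x‖ₑ ∂μ ≤
      (∫⁻ t, ‖φ t‖ₑ ∂μ) * ∫⁻ x in thickening δ S, ‖h x‖ₑ ∂μ := by
  have measurable_integrand : AEMeasurable (fun q : E × E => ‖φ q.2‖ₑ * ‖h (q.1 - q.2)‖ₑ)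
      ((μ.restrict S).prod μ) := by
    simpa [enorm_smul] using ((hφ.convolution_integrand (lsmul ℝ ℝ) hh).mono_ac
      (Measure.restrict_le_self.absolutelyContinuous.prod .rfl)).enorm
  have translate_le {t : E} (ht : t ∈ Function.support φ) :
      ∫⁻ x in S, ‖h (x - t)‖ₑ ∂μ ≤ ∫⁻ x in thickening δ S, ‖h x‖ₑ ∂μ := by
    rw [(measurePreserving_sub_right μ t).setLIntegral_comp_emb
      (MeasurableEquiv.subRight t).measurableEmbedding (fun y => ‖h y‖ₑ) S]
    refine lintegral_mono_set (image_subset_iff.2 fun x hx => mem_thickening_iff.2 ⟨x, hx, ?_⟩)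
    simpa [dist_eq_norm] using hδ ht
  calc ∫⁻ x in S, ‖(φ ⋆[lsmul ℝ ℝ, μ] h) x‖ₑ ∂μ
      ≤ ∫⁻ x in S, ∫⁻ t, ‖φ t‖ₑ * ‖h (x - t)‖ₑ ∂μ ∂μ := lintegral_mono fun x => by
        simpa [convolution_lsmul, enorm_smul] using
          enorm_integral_le_lintegral_enorm (μ := μ) fun t => φ t • h (x - t)
    _ = ∫⁻ t, ‖φ t‖ₑ * ∫⁻ x in S, ‖h (x - t)‖ₑ ∂μ ∂μ := by
        rw [lintegral_lintegral_swap measurable_integrand]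
        exact lintegral_congr fun t => lintegral_const_mul' _ _ enorm_ne_top
    _ ≤ ∫⁻ t, ‖φ t‖ₑ * ∫⁻ x in thickening δ S, ‖h x‖ₑ ∂μ ∂μ := by
        refine lintegral_mono fun t => ?_
        by_cases ht : t ∈ Function.support φ
        · exact mul_le_mul_right (translate_le ht) _
        · simp [Function.notMem_support.1 ht]
    _ = _ := lintegral_mul_const'' _ hφ.enorm

variable [NormedSpace ℝ E] [FiniteDimensional ℝ E] [μ.IsAddHaarMeasure]

theorem lintegral_enorm_normed (φ : ContDiffBump (0 : E)) : ∫⁻ t, ‖φ.normed μ t‖ₑ ∂μ = 1 := by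
  rw [lintegral_enorm_of_nonneg φ.nonneg_normed,
    ← ofReal_integral_eq_lintegral_ofReal φ.integrable_normed (.of_forall φ.nonneg_normed),
    φ.integral_normed, ENNReal.ofReal_one]

theorem lintegral_enorm_normed_convolution_cond_ball_le (φ : ContDiffBump (0 : E))
    (hh : AEStronglyMeasurable h μ) {c x : E} {r : ℝ} (hr : φ.rOut ≤ r) (hc : dist c x ≤ r) :
    ∫⁻ y, ‖(φ.normed μ ⋆[lsmul ℝ ℝ, μ] h) y‖ₑ ∂μ[|ball c r] ≤
      3 ^ finrank ℝ E * ∫⁻ y, ‖h y‖ₑ ∂μ[|ball x (3 * r)] := by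
  have : 0 < r := φ.rOut_pos.trans_le hr
  have thickening_subset : thickening φ.rOut (ball c r) ⊆ ball x (3 * r) :=
    (Metric.thickening_ball _ _ _).trans (ball_subset_ball' (by linarith))
  have measure_ball : μ (ball x (3 * r)) = 3 ^ finrank ℝ E * μ (ball c r) := by
    rw [Measure.addHaar_ball_mul_of_pos μ x three_pos, Measure.addHaar_ball_center μ c]
    simp [ENNReal.ofReal_pow]
  have setLIntegral_le : ∫⁻ y in ball c r, ‖(φ.normed μ ⋆[lsmul ℝ ℝ, μ] h) y‖ₑ ∂μ ≤
      ∫⁻ y in ball x (3 * r), ‖h y‖ₑ ∂μ := by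
    refine (setLIntegral_enorm_convolution_le φ.continuous_normed.aestronglyMeasurable hh
      φ.support_normed_eq.subset _).trans ?_
    rw [lintegral_enorm_normed, one_mul]
    exact lintegral_mono_set thickening_subset
  have inv_eq : (μ (ball c r))⁻¹ = 3 ^ finrank ℝ E * (μ (ball x (3 * r)))⁻¹ := by
    rw [measure_ball, ENNReal.mul_inv (by simp) (by simp), ← mul_assoc,
      ENNReal.mul_inv_cancel (by simp) (by simp), one_mul]
  rw [ProbabilityTheory.cond, ProbabilityTheory.cond, lintegral_smul_measure,
    lintegral_smul_measure, smul_eq_mul, smul_eq_mul, inv_eq, mul_assoc]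
  gcongr

theorem exists_contDiffBump_tendsto_rOut_zero (E : Type*) [NormedAddCommGroup E]
    [NormedSpace ℝ E] : ∃ φ : ℕ → ContDiffBump (0 : E),
      Tendsto (fun k => (φ k).rOut) atTop (𝓝 0) ∧ ∀ k, (φ k).rOut ≤ 2 * (φ k).rIn := by
  refine ⟨fun k => ⟨1 / (k + 1) / 2, 1 / (k + 1), by positivity, half_lt_self (by positivity)⟩,
    tendsto_one_div_add_atTop_nhds_zero_nat, fun k => ?_⟩
  exact (mul_div_cancel₀ _ two_ne_zero).ge

end Convolution

section WeakFDeriv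

open AffineMap (lineMap)
open ContinuousLinearMap (lsmul)
open Module (finrank)
open scoped Convolution ContDiff ProbabilityTheory

variable {E F : Type*} [NormedAddCommGroup E] [NormedSpace ℝ E] [MeasurableSpace E]
  [NormedAddCommGroup F] [NormedSpace ℝ F]

/-- `f'` is the weak Fréchet derivative of `f` with respect to `μ`. Both sides of the integration
by parts formula are continuous linear maps `E →L[ℝ] F`, so all directions are tested at once;
local integrability rules out junk values of these integrals. -/
structure HasWeakFDeriv (f : E → F) (f' : E → E →L[ℝ] F) (μ : Measure E) : Prop where
  locallyIntegrable : LocallyIntegrable f μ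
  locallyIntegrable_fderiv : LocallyIntegrable f' μ
  integral_fderiv_smulRight (η : E → ℝ) (hη : ContDiff ℝ ∞ η) (hηc : HasCompactSupport η) :
    ∫ x, (fderiv ℝ η x).smulRight (f x) ∂μ = -∫ x, η x • f' x ∂μ

namespace HasWeakFDeriv

variable [BorelSpace E] [FiniteDimensional ℝ E] {μ : Measure E} [μ.IsAddHaarMeasure]
  {f : E → F} {f' : E → E →L[ℝ] F}

theorem hasFDerivAt_convolution (h : HasWeakFDeriv f f' μ) {φ : E → ℝ} (hφ : ContDiff ℝ ∞ φ)
    (hφc : HasCompactSupport φ) (x : E) :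
    HasFDerivAt (φ ⋆[lsmul ℝ ℝ, μ] f) ((φ ⋆[lsmul ℝ ℝ, μ] f') x) x := by
  have hasCompactSupport_reflected : HasCompactSupport fun t => φ (x - t) :=
    hφc.comp_homeomorph (Homeomorph.subLeft x)
  have fderiv_reflected (t : E) : fderiv ℝ (fun t => φ (x - t)) t = -fderiv ℝ φ (x - t) := by
    have hφx : HasFDerivAt φ (fderiv ℝ φ (x - t)) (x - t) :=
      (hφ.differentiable (by simp) _).hasFDerivAt
    simpa using! (hφx.comp t ((hasFDerivAt_id t).const_sub x)).fderiv
  have smulRight_neg (t : E) : (-fderiv ℝ φ (x - t)).smulRight (f t) =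
      -(lsmul ℝ ℝ).precompL E (fderiv ℝ φ (x - t)) (f t) := by
    ext v
    exact neg_smul _ _
  have parts := h.integral_fderiv_smulRight (fun t => φ (x - t))
    (hφ.comp (contDiff_const.sub contDiff_id)) hasCompactSupport_reflected
  simp only [fderiv_reflected, smulRight_neg, integral_neg, neg_inj] at parts
  rw [convolution_lsmul_swap, ← parts, ← convolution_eq_swap]
  exact hφc.hasFDerivAt_convolution_left _ (hφ.of_le (by simp)) h.locallyIntegrable x

variable {x a b : E} {s t : ℝ} {K : ℝ≥0∞}

theorem lintegral_edist_normed_convolution_le (h : HasWeakFDeriv f f' μ)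
    (hK : ∀ r, 0 < r → ∫⁻ y, ‖f' y‖ₑ ∂μ[|ball x r] ≤ K) (φ : ContDiffBump (0 : E))
    (hφ : φ.rOut ≤ min s t) (ha : dist a x ≤ s) (hb : dist b x ≤ t) :
    ∫⁻ z, edist ((φ.normed μ ⋆[lsmul ℝ ℝ, μ] f) (a + s • z))
        ((φ.normed μ ⋆[lsmul ℝ ℝ, μ] f) (b + t • z)) ∂μ[|ball 0 1] ≤
      3 ^ finrank ℝ E * K * (edist a b + edist s t) := by
  have min_pos : 0 < min s t := φ.rOut_pos.trans_le hφ
  have fderiv_eq : fderiv ℝ (φ.normed μ ⋆[lsmul ℝ ℝ, μ] f) = φ.normed μ ⋆[lsmul ℝ ℝ, μ] f' :=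
    funext fun y => (h.hasFDerivAt_convolution φ.contDiff_normed
      φ.hasCompactSupport_normed y).fderiv
  refine lintegral_edist_comp_add_smul_le_of_contDiff
    (φ.hasCompactSupport_normed.contDiff_convolution_left _ φ.contDiff_normed h.locallyIntegrable)
    (lt_min_iff.1 min_pos).1 (lt_min_iff.1 min_pos).2 fun θ hθ => ?_
  have le_radius : min s t ≤ lineMap s t θ := min_le_lineMap s t hθ
  rw [fderiv_eq]
  refine (lintegral_enorm_normed_convolution_cond_ball_le φ
    h.locallyIntegrable_fderiv.aestronglyMeasurable (hφ.trans le_radius)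
    (dist_lineMap_le_lineMap ha hb hθ)).trans ?_
  gcongr
  exact hK _ (mul_pos three_pos (min_pos.trans_le le_radius))

variable [CompleteSpace F]

theorem lintegral_edist_comp_add_smul_le (h : HasWeakFDeriv f f' μ)
    (hK : ∀ r, 0 < r → ∫⁻ y, ‖f' y‖ₑ ∂μ[|ball x r] ≤ K) (hs : 0 < s) (ht : 0 < t)
    (ha : dist a x ≤ s) (hb : dist b x ≤ t) :
    ∫⁻ z, edist (f (a + s • z)) (f (b + t • z)) ∂μ[|ball 0 1] ≤
      3 ^ finrank ℝ E * K * (edist a b + edist s t) := by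
  obtain ⟨φ, hφ, rOut_le⟩ := exists_contDiffBump_tendsto_rOut_zero E
  let g (k : ℕ) : E → F := (φ k).normed μ ⋆[lsmul ℝ ℝ, μ] f
  have continuous_g (k : ℕ) : Continuous (g k) := continuous_iff_continuousAt.2 fun y =>
    (h.hasFDerivAt_convolution (φ k).contDiff_normed
      (φ k).hasCompactSupport_normed y).continuousAt
  have tendsto_g : ∀ᵐ y ∂μ, Tendsto (fun k => g k y) atTop (𝓝 (f y)) :=
    ContDiffBump.ae_convolution_tendsto_right_of_locallyIntegrable hφ (.of_forall rOut_le)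
      h.locallyIntegrable
  calc ∫⁻ z, edist (f (a + s • z)) (f (b + t • z)) ∂μ[|ball 0 1]
      ≤ ∫⁻ z, liminf (fun k => edist (g k (a + s • z)) (g k (b + t • z))) atTop
          ∂μ[|ball 0 1] := by
        refine lintegral_mono_ae ?_
        filter_upwards [ae_comp_add_smul_cond_ball tendsto_g a hs,
          ae_comp_add_smul_cond_ball tendsto_g b ht] with z hza hzb
        exact (hza.edist hzb).liminf_eq.ge
    _ ≤ liminf (fun k => ∫⁻ z, edist (g k (a + s • z)) (g k (b + t • z)) ∂μ[|ball 0 1])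
          atTop :=
        lintegral_liminf_le fun k => Continuous.measurable (by fun_prop)
    _ ≤ _ := by
        refine liminf_le_of_frequently_le' (Eventually.frequently ?_)
        filter_upwards [hφ.eventually_le_const (lt_min hs ht)] with k hk
        exact h.lintegral_edist_normed_convolution_le hK (φ k) hk ha hb

theorem edist_average_ball_le (h : HasWeakFDeriv f f' μ)
    (hK : ∀ r, 0 < r → ⨍⁻ y in ball x r, ‖f' y‖ₑ ∂μ ≤ K) (hs : 0 < s) (ht : 0 < t)
    (ha : dist a x ≤ s) (hb : dist b x ≤ t) :
    edist (⨍ y in ball a s, f y ∂μ) (⨍ y in ball b t, f y ∂μ) ≤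
      3 ^ finrank ℝ E * K * (edist a b + edist s t) := by
  have measurableEmbedding (c : E) {r : ℝ} (hr : 0 < r) :
      MeasurableEmbedding fun z : E => c + r • z :=
    (measurableEmbedding_addLeft c).comp (measurableEmbedding_const_smul₀ hr.ne')
  have average_eq (c : E) {r : ℝ} (hr : 0 < r) :
      ⨍ y in ball c r, f y ∂μ = ∫ z, f (c + r • z) ∂μ[|ball 0 1] := by
    rw [setAverage_eq']
    exact ((measurePreserving_add_smul_cond_ball c hr).integral_comp
      (measurableEmbedding c hr) f).symm
  have integrable_comp (c : E) {r : ℝ} (hr : 0 < r) :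
      Integrable (fun z => f (c + r • z)) μ[|ball 0 1] := by
    refine ((measurePreserving_add_smul_cond_ball c hr).integrable_comp_emb
      (measurableEmbedding c hr)).2 (Integrable.smul_measure ?_ ?_)
    · exact (h.locallyIntegrable.integrableOn_isCompact (isCompact_closedBall c r)).mono_set
        ball_subset_closedBall
    · exact ENNReal.inv_ne_top.2 (measure_ball_pos μ c hr).ne'
  rw [average_eq a hs, average_eq b ht]
  refine (edist_integral_le_lintegral_edist (integrable_comp a hs) (integrable_comp b ht)).trans
    (h.lintegral_edist_comp_add_smul_le (fun r hr => ?_) hs ht ha hb)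
  simpa only [setLAverage_eq'] using! hK r hr

theorem edist_tendsto_average_ball_le (h : HasWeakFDeriv f f' μ)
    (hK : ∀ r, 0 < r → ⨍⁻ y in ball x r, ‖f' y‖ₑ ∂μ ≤ K) {L : F}
    (hL : Tendsto (fun r => ⨍ y in ball x r, f y ∂μ) (𝓝[>] 0) (𝓝 L)) {R : ℝ} (hR : 0 < R) :
    edist L (⨍ y in ball x R, f y ∂μ) ≤ 3 ^ finrank ℝ E * K * ENNReal.ofReal R := by
  refine le_of_tendsto (hL.edist tendsto_const_nhds) ?_
  filter_upwards [Ioo_mem_nhdsGT hR] with r hr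
  have edist_radii_le : edist r R ≤ ENNReal.ofReal R := by
    rw [edist_dist, Real.dist_eq, abs_sub_comm, abs_of_pos (sub_pos.2 hr.2)]
    exact ENNReal.ofReal_le_ofReal (sub_le_self R hr.1.le)
  calc edist (⨍ y in ball x r, f y ∂μ) (⨍ y in ball x R, f y ∂μ)
      ≤ 3 ^ finrank ℝ E * K * (edist x x + edist r R) :=
        h.edist_average_ball_le hK hr.1 hR (by simpa using hr.1.le) (by simpa using hR.le)
    _ ≤ 3 ^ finrank ℝ E * K * ENNReal.ofReal R := by
        rw [edist_self, zero_add]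
        gcongr

end HasWeakFDeriv

theorem preciseRep_lipschitzOn_good_set_general [BorelSpace E] [FiniteDimensional ℝ E]
    [CompleteSpace F] {μ : Measure E} [μ.IsAddHaarMeasure] {f : E → F} {f' : E → E →L[ℝ] F}
    (h : HasWeakFDeriv f f' μ) {S : Set E} {K : ℝ≥0}
    (hK : ∀ x ∈ S, ∀ r, 0 < r → ⨍⁻ y in ball x r, ‖f' y‖ₑ ∂μ ≤ K) {fRep : E → F}
    (hfRep : ∀ x ∈ S, Tendsto (fun r => ⨍ y in ball x r, f y ∂μ) (𝓝[>] 0) (𝓝 (fRep x))) :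
    LipschitzOnWith (3 ^ (finrank ℝ E + 1) * K) fRep S := by
  intro x hx y hy
  rcases eq_or_ne x y with rfl | hxy
  · simp
  let A (c : E) : F := ⨍ z in ball c (dist x y), f z ∂μ
  have R_pos : 0 < dist x y := dist_pos.2 hxy
  have hxA := h.edist_tendsto_average_ball_le (hK x hx) (hfRep x hx) R_pos
  have hyA := h.edist_tendsto_average_ball_le (hK y hy) (hfRep y hy) R_pos
  have hAA : edist (A x) (A y) ≤ 3 ^ finrank ℝ E * K * (edist x y + edist _ _) :=
    h.edist_average_ball_le (hK x hx) R_pos R_pos (by simp) (dist_comm y x).le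
  rw [← edist_dist] at hxA hyA
  rw [edist_self, add_zero] at hAA
  calc edist (fRep x) (fRep y)
      ≤ edist (fRep x) (A x) + edist (A x) (A y) + edist (A y) (fRep y) := edist_triangle4 ..
    _ ≤ 3 ^ finrank ℝ E * K * edist x y + 3 ^ finrank ℝ E * K * edist x y +
          3 ^ finrank ℝ E * K * edist x y := by
        rw [edist_comm (A y)]
        gcongr
    _ = ↑(3 ^ (finrank ℝ E + 1) * K) * edist x y := by
        push_cast
        ring

end WeakFDeriv

section Euclidean

variable {n : ℕ} {f : Euc n → ℝ} {g : Euc n → Euc n}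

theorem flatMap_replicate_single {ι : Type*} [DecidableEq ι] (i : ι) (l : List ι) :
    (l.flatMap fun j => List.replicate ((Pi.single i 1 : ι → ℕ) j) j) =
      List.replicate (l.count i) i := by
  induction l with
  | nil => rfl
  | cons j l ih =>
    rcases eq_or_ne j i with rfl | hj
    · simp [ih, List.replicate_succ]
    · simp [ih, hj]

theorem mderiv_single (i : Fin n) (η : Euc n → ℝ) (x : Euc n) :
    mderiv (Pi.single i 1) η x = fderiv ℝ η x (EuclideanSpace.single i 1) := by
  rw [mderiv, flatMap_replicate_single, List.count_eq_one_of_mem (List.nodup_finRange n)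
    (List.mem_finRange i)]
  rfl

theorem mdeg_single (i : Fin n) : mdeg (Pi.single i 1) = 1 := by
  simp [mdeg]

theorem IsWeakGradient.hasWeakFDeriv (hfg : IsWeakGradient f g) (hf : LocallyIntegrable f)
    (hg : LocallyIntegrable g) : HasWeakFDeriv f (fun x => innerSL ℝ (g x)) volume := by
  have locallyIntegrable_innerSL : LocallyIntegrable fun x => innerSL ℝ (g x) :=
    hg.mono ((innerSL ℝ).continuous.comp_aestronglyMeasurable hg.aestronglyMeasurable)
      (.of_forall fun x => (innerSL_apply_norm ℝ (g x)).le)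
  refine ⟨hf, locallyIntegrable_innerSL, fun η hη hηc => ?_⟩
  have smulRight_eq (x : Euc n) : (fderiv ℝ η x).smulRight (f x) = f x • fderiv ℝ η x := by
    ext v
    exact mul_comm _ _
  have integrable_left : Integrable fun x => f x • fderiv ℝ η x :=
    hf.integrable_smul_right_of_hasCompactSupport (hη.continuous_fderiv (by simp))
      (hηc.fderiv ℝ)
  have integrable_right : Integrable fun x => η x • innerSL ℝ (g x) :=
    locallyIntegrable_innerSL.integrable_smul_left_of_hasCompactSupport hη.continuous hηc
  simp only [smulRight_eq]
  refine ContinuousLinearMap.coe_injective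
    ((EuclideanSpace.basisFun (Fin n) ℝ).toBasis.ext fun i => ?_)
  have parts := hfg i η hη hηc
  simp only [mderiv_single, mdeg_single, pow_one, neg_one_mul] at parts
  simp [ContinuousLinearMap.integral_apply integrable_left,
    ContinuousLinearMap.integral_apply integrable_right, mul_comm, parts]

theorem tendsto_preciseRep {x : Euc n}
    (h : ∃ L : ℝ, Tendsto (fun r : ℝ => ⨍ y in ball x r, f y) (𝓝[>] (0 : ℝ)) (𝓝 L)) :
    Tendsto (fun r : ℝ => ⨍ y in ball x r, f y) (𝓝[>] (0 : ℝ)) (𝓝 (preciseRep f x)) := by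
  rw [preciseRep, preciseRepV, dif_pos h]
  exact h.choose_spec

theorem setLAverage_ball_le_maxFn (u : Euc n → ℝ≥0∞) (x : Euc n) {r : ℝ} (hr : 0 < r) :
    ⨍⁻ y in ball x r, u y ∂volume ≤ maxFn u x := by
  rw [setLAverage_eq, ENNReal.div_eq_inv_mul]
  exact le_iSup₂ (f := fun (r : ℝ) (_ : 0 < r) => (volume (ball x r))⁻¹ * ∫⁻ y in ball x r, u y)
    r hr

theorem IsWeakGradient.lipschitzOnWith_preciseRep (hfg : IsWeakGradient f g)
    (hf : LocallyIntegrable f) (hg : LocallyIntegrable g) (α : ℝ≥0) :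
    LipschitzOnWith (3 ^ (n + 1) * α) (preciseRep f)
      ({x | maxFn (fun y => ENNReal.ofReal ‖g y‖) x ≤ α} \
        {x | ¬ ∃ L : ℝ, Tendsto (fun r : ℝ => ⨍ y in ball x r, f y) (𝓝[>] (0 : ℝ)) (𝓝 L)}) := by
  have average_le {x : Euc n} (hx : maxFn (fun y => ENNReal.ofReal ‖g y‖) x ≤ α) (r : ℝ)
      (hr : 0 < r) : ⨍⁻ y in ball x r, ‖innerSL ℝ (g y)‖ₑ ∂volume ≤ α := by
    simp only [← ofReal_norm, innerSL_apply_norm]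
    exact (setLAverage_ball_le_maxFn _ x hr).trans hx
  simpa only [finrank_euclideanSpace_fin] using
    preciseRep_lipschitzOn_good_set_general (hfg.hasWeakFDeriv hf hg)
      (fun x hx => average_le hx.1) fun x hx => tendsto_preciseRep (not_not.1 hx.2)

end Euclidean

/-- Lemma 4.4: the precise representative is Lipschitz on the good set
`A_α \ 𝒩`, with constant `C(n) α`. -/
theorem preciseRep_lipschitzOn_good_set {n : ℕ} :
    ∃ C : ℝ, 0 < C ∧
      ∀ (p : ℝ≥0∞), 1 ≤ p →
      ∀ (f : Euc n → ℝ) (g : Euc n → Euc n),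
        MemLp f p volume → MemLp g p volume → IsWeakGradient f g →
      ∀ α : ℝ, 0 < α →
      ∀ Aα N : Set (Euc n),
        Aα = {x | maxFn (fun y => ENNReal.ofReal ‖g y‖) x ≤ ENNReal.ofReal α} →
        N = {x | ¬ ∃ L : ℝ,
          Tendsto (fun r : ℝ => ⨍ y in ball x r, f y) (𝓝[>] (0:ℝ)) (𝓝 L)} →
        (∃ K : ℝ≥0, LipschitzOnWith K (preciseRep f) (Aα \ N)) ∧
        ∀ x ∈ Aα \ N, ∀ y ∈ Aα \ N,
          |preciseRep f x - preciseRep f y| ≤ C * α * ‖x - y‖ := by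
  refine ⟨3 ^ (n + 1), by positivity, ?_⟩
  rintro p hp f g hf hg hfg α hα _ _ rfl rfl
  have lipschitz := hfg.lipschitzOnWith_preciseRep (hf.locallyIntegrable hp)
    (hg.locallyIntegrable hp) α.toNNReal
  refine ⟨⟨_, lipschitz⟩, fun x hx y hy => ?_⟩
  simpa [dist_eq_norm, hα.le] using lipschitz.dist_le_mul x hx y hy
end
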